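/- Let G_1 and G_2 be two vertex-disjoint 2-edge-colored graphs with Hamiltonian alternating cycles C_1 = x_0 x_1 ⋯ x_{2n−1} x_0 and C_2 = y_0 y_1 ⋯ y_{2m−1} y_0 respectively, and let G ∈ G_1 ⊕ G_2. If there is no good pair in G, and for each i ∈ {1,2} there is a vertex of C_i that is non-singular with respect to C_{3−i}, then for each vertex v ∈ V(G) and each even integer l ∈ [4, 4m_1] ∪ [2M_2, 2n+2m], where m_1 = min{n, m} and M_2 = max{n, m}, there is an alternating cycle of length l in G passing through v. -/

import Mathlib

/-- An alternating cycle of length `N` in the 2-edge-colored graph `(G, c)`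
(colors: `true` = red, `false` = blue). -/
def IsAltCycle {V : Type*} (G : SimpleGraph V) (c : Sym2 V → Bool) {N : ℕ}
    (x : ZMod N → V) : Prop :=
  Function.Injective x ∧ (∀ i, G.Adj (x i) (x (i + 1))) ∧
    ∀ i, c s(x i, x (i + 1)) ≠ c s(x (i + 1), x (i + 2))

/-- There is a good pair of edges between the two vertex-disjoint alternating
cycles `x` and `y`. -/
def HasGoodPair {V : Type*} (G : SimpleGraph V) (c : Sym2 V → Bool) {N M : ℕ}
    (x : ZMod N → V) (y : ZMod M → V) : Prop :=
  ∃ (s s' : ZMod N) (t t' : ZMod M),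
    (s' = s - 1 ∨ s' = s + 1) ∧ (t' = t - 1 ∨ t' = t + 1) ∧
    G.Adj (x s) (y t) ∧ G.Adj (x s') (y t') ∧
    c s(x s, x s') = c s(x s, y t) ∧
    c s(x s', y t') = c s(x s, y t) ∧
    c s(y t', y t) = c s(x s, y t)

/-- `G` is a colored generalized sum `G ∈ G₁ ⊕ G₂` of two vertex-disjoint 2-edge-colored
graphs `G₁`, `G₂` with Hamiltonian alternating cycles `C₁ = x` (of length `2n`) and
`C₂ = y` (of length `2m`): here `G₁`, `G₂` are the induced colored subgraphs of `G` on
`V(G₁) = range x` and `V(G₂) = range y`, so the conditions are that `x` and `y` are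
alternating cycles of `G` with disjoint ranges covering `V(G)` (Hamiltonicity of `Cᵢ`
in `Gᵢ`), and between any two vertices of different parts there is exactly one
(arbitrarily colored) edge of `G`. -/
def IsCGSHam {V : Type*} (G : SimpleGraph V) (c : Sym2 V → Bool) {n m : ℕ}
    (x : ZMod (2 * n) → V) (y : ZMod (2 * m) → V) : Prop :=
  IsAltCycle G c x ∧ IsAltCycle G c y ∧
  Disjoint (Set.range x) (Set.range y) ∧
  (∀ v : V, v ∈ Set.range x ∪ Set.range y) ∧
  (∀ (i : ZMod (2 * n)) (j : ZMod (2 * m)), G.Adj (x i) (y j))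

/-- The set of exterior edges of a colored generalized sum with parts `range x` and
`range y`: the edges joining the two parts. -/
def extEdges {V : Type*} {N M : ℕ} (x : ZMod N → V) (y : ZMod M → V) : Set (Sym2 V) :=
  {e | ∃ i j, e = s(x i, y j)}

/-- The number of red exterior edges incident with `v`. -/
noncomputable def dred {V : Type*} (c : Sym2 V → Bool) {N M : ℕ}
    (x : ZMod N → V) (y : ZMod M → V) (v : V) : ℕ :=
  {e : Sym2 V | e ∈ extEdges x y ∧ v ∈ e ∧ c e = true}.ncard

/-- The number of blue exterior edges incident with `v`. -/
noncomputable def dblue {V : Type*} (c : Sym2 V → Bool) {N M : ℕ}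
    (x : ZMod N → V) (y : ZMod M → V) (v : V) : ℕ :=
  {e : Sym2 V | e ∈ extEdges x y ∧ v ∈ e ∧ c e = false}.ncard

/-- The vertex `x i` of `C₁` is singular with respect to `C₂`: the set of edges from
`x i` to `V(C₂)` (in a colored generalized sum these are all pairs `x i - y j`) is
nonempty and they all have the same color. -/
def SingularX {V : Type*} (c : Sym2 V → Bool) {N M : ℕ}
    (x : ZMod N → V) (y : ZMod M → V) (i : ZMod N) : Prop :=
  (∃ _j : ZMod M, True) ∧ ∀ j j' : ZMod M, c s(x i, y j) = c s(x i, y j')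

/-- The vertex `y j` of `C₂` is singular with respect to `C₁`. -/
def SingularY {V : Type*} (c : Sym2 V → Bool) {N M : ℕ}
    (x : ZMod N → V) (y : ZMod M → V) (j : ZMod M) : Prop :=
  (∃ _i : ZMod N, True) ∧ ∀ i i' : ZMod N, c s(x i, y j) = c s(x i', y j)

/-!
Color every vertex by the color of the edge by which its cycle leaves it, and orient each edge
between differently colored vertices away from the end whose color it has. Both given cycles
become directed cycles, and every directed cycle of the resulting digraph is alternating.

If an arc `x i → y j` is given, the edge between `x (i + 1)` and `y (j - 1)` points from `x` to `y`
as well, since otherwise the two edges are a good pair. Going around the cycles, all edges on the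
antidiagonal `i + j = t` point the same way. Non-singular vertices provide arcs in both directions,
possibly after reversing the second cycle, so the direction changes both ways between some `t` and
`t + 2`. Gluing a path of each cycle along one change of direction yields the cycles that are not
spanning; gluing two paths of each cycle along both changes yields the spanning one.
-/

section Dicycles

variable {V : Type*} {R : V → V → Prop} {N M : ℕ}

/-- The sequence `x`, indexed cyclically by `ZMod N`, is a directed cycle of the digraph with arc
relation `R`. For `N = 0` this is a two-way infinite path, as `ZMod 0 = ℤ`. -/
def IsDicycle (R : V → V → Prop) (x : ZMod N → V) : Prop :=
  Function.Injective x ∧ ∀ i, R (x i) (x (i + 1))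

/-- Some directed cycle of length `l` of the digraph `R` passes through `v`: the conclusion of all
gluing constructions below. -/
def HasDicycleThrough (R : V → V → Prop) (l : ℕ) (v : V) : Prop :=
  ∃ z : ZMod l → V, IsDicycle R z ∧ v ∈ Set.range z

-- The cyclically consecutive entries of `L` are the consecutive entries of `L ++ L`.
theorem hasDicycleThrough_of_isChain {L : List V} (hnodup : L.Nodup)
    (hchain : (L ++ L).IsChain R) {v : V} (hv : v ∈ L) : HasDicycleThrough R L.length v := by
  have : NeZero L.length := ⟨(List.length_pos_of_mem hv).ne'⟩
  have hval_succ (i : ZMod L.length) : (i + 1).val = (i.val + 1) % L.length := by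
    rw [← ZMod.val_natCast, Nat.cast_succ, ZMod.natCast_rightInverse i]
  refine ⟨fun i => L[i.val]'i.val_lt, ⟨fun i j hij => ?_, fun i => ?_⟩, ?_⟩
  · exact ZMod.val_injective _ (hnodup.getElem_inj_iff.1 hij)
  · have hi := i.val_lt
    have harc := List.isChain_iff_getElem.1 hchain i.val (by rw [List.length_append]; omega)
    simp only [hval_succ]
    rcases Nat.lt_or_ge (i.val + 1) L.length with h | h
    · simpa [List.getElem_append, hi, h, Nat.mod_eq_of_lt h] using harc
    · simpa [List.getElem_append, hi, h.antisymm hi] using harc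
  · obtain ⟨k, hk, rfl⟩ := List.getElem_of_mem hv
    exact ⟨k, by simp only [ZMod.val_natCast_of_lt hk]⟩

/-- The path `x i, x (i + 1), …, x (i + k)` along the cyclic sequence `x`, as a list of `k + 1`
vertices, so that cycles can be glued from such paths by concatenation. -/
def dipath (x : ZMod N → V) (i : ZMod N) (k : ℕ) : List V :=
  (List.range (k + 1)).map fun a : ℕ => x (i + a)

@[simp]
theorem length_dipath (x : ZMod N → V) (i : ZMod N) (k : ℕ) : (dipath x i k).length = k + 1 := by
  simp [dipath]

@[simp]
theorem head?_dipath (x : ZMod N → V) (i : ZMod N) (k : ℕ) :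
    (dipath x i k).head? = some (x i) := by
  simp [dipath, List.head?_range]

@[simp]
theorem getLast?_dipath (x : ZMod N → V) (i : ZMod N) (k : ℕ) :
    (dipath x i k).getLast? = some (x (i + k)) := by
  simp [dipath, List.getLast?_range]

theorem dipath_add (x : ZMod N → V) (i : ZMod N) (p q : ℕ) :
    dipath x i (p + 1 + q) = dipath x i p ++ dipath x (i + (p + 1)) q := by
  simp [dipath, List.range_add, add_assoc]

theorem mem_dipath {x : ZMod N → V} {i : ZMod N} {k : ℕ} {v : V} :
    v ∈ dipath x i k ↔ ∃ a : ℕ, a ≤ k ∧ x (i + a) = v := by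
  simp [dipath]

theorem start_mem_dipath (x : ZMod N → V) (i : ZMod N) (k : ℕ) : x i ∈ dipath x i k :=
  mem_dipath.2 ⟨0, Nat.zero_le k, by simp⟩

theorem IsDicycle.nodup_dipath {x : ZMod N → V} (hx : IsDicycle R x) (i : ZMod N) {k : ℕ}
    (hk : k < N) : (dipath x i k).Nodup := by
  refine List.Nodup.map_on (fun a ha b hb hab => ?_) List.nodup_range
  rw [List.mem_range] at ha hb
  have hcast := add_left_cancel (hx.1 hab)
  rwa [ZMod.natCast_eq_natCast_iff', Nat.mod_eq_of_lt (by omega),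
    Nat.mod_eq_of_lt (by omega)] at hcast

theorem IsDicycle.isChain_dipath {x : ZMod N → V} (hx : IsDicycle R x) (i : ZMod N) (k : ℕ) :
    (dipath x i k).IsChain R := by
  rw [dipath, List.isChain_map, List.isChain_range_succ]
  intro a _
  simpa [add_assoc] using hx.2 (i + a)

/-- Two vertex-disjoint directed cycles of the digraph `R`, from which longer and shorter cycles are
glued. -/
structure DisjointDicycles (R : V → V → Prop) (x : ZMod N → V) (y : ZMod M → V) : Prop where
  left : IsDicycle R x
  right : IsDicycle R y
  ne : ∀ i j, x i ≠ y j

variable {x : ZMod N → V} {y : ZMod M → V}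

theorem DisjointDicycles.symm (h : DisjointDicycles R x y) : DisjointDicycles R y x :=
  ⟨h.right, h.left, fun i j => (h.ne j i).symm⟩

theorem DisjointDicycles.nodup_dipaths (h : DisjointDicycles R x y) (i : ZMod N) (j : ZMod M)
    {k k' : ℕ} (hk : k < N) (hk' : k' < M) : (dipath x i k ++ dipath y j k').Nodup := by
  rw [List.nodup_append]
  refine ⟨h.left.nodup_dipath i hk, h.right.nodup_dipath j hk', fun u hu w hw => ?_⟩
  obtain ⟨_, _, rfl⟩ := mem_dipath.1 hu
  obtain ⟨_, _, rfl⟩ := mem_dipath.1 hw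
  exact h.ne _ _

theorem DisjointDicycles.hasDicycleThrough_of_two_dipaths (h : DisjointDicycles R x y)
    {i : ZMod N} {j : ZMod M} {k k' : ℕ} (hk : k < N) (hk' : k' < M) (hxy : R (x (i + k)) (y j))
    (hyx : R (y (j + k')) (x i)) {v : V} (hv : v ∈ dipath x i k ++ dipath y j k') :
    HasDicycleThrough R (k + 1 + (k' + 1)) v := by
  have := hasDicycleThrough_of_isChain (R := R) (h.nodup_dipaths i j hk hk') ?_ hv
  · simpa using this
  · simp [List.isChain_append, h.left.isChain_dipath, h.right.isChain_dipath, hxy, hyx]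

theorem DisjointDicycles.hasDicycleThrough_of_four_dipaths (h : DisjointDicycles R x y)
    {i : ZMod N} {j : ZMod M} {p q p' q' : ℕ} (hN : p + 1 + q < N) (hM : p' + 1 + q' < M)
    (h₁ : R (x (i + p)) (y j)) (h₂ : R (y (j + p')) (x (i + (p + 1))))
    (h₃ : R (x (i + (p + 1) + q)) (y (j + (p' + 1)))) (h₄ : R (y (j + (p' + 1) + q')) (x i))
    {v : V} (hv : v ∈ dipath x i (p + 1 + q) ++ dipath y j (p' + 1 + q')) :
    HasDicycleThrough R (p + 1 + q + 1 + (p' + 1 + q' + 1)) v := by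
  have hperm : (dipath x i (p + 1 + q) ++ dipath y j (p' + 1 + q')).Perm
      (dipath x i p ++ dipath y j p' ++ dipath x (i + (p + 1)) q ++
        dipath y (j + (p' + 1)) q') := by
    simp only [dipath_add, List.append_assoc]
    exact (List.perm_append_comm_assoc _ _ _).append_left _
  have := hasDicycleThrough_of_isChain (R := R) (hperm.nodup_iff.1 (h.nodup_dipaths i j hN hM)) ?_
    (hperm.subset hv)
  · convert this using 1
    simp only [List.length_append, length_dipath]
    ring
  · simp [List.isChain_append, h.left.isChain_dipath, h.right.isChain_dipath, h₁, h₂, h₃, h₄]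

/-- All pairs `x i`, `y j` on the antidiagonal `i + j = t` are joined by an arc from `x i` to `y j`.
The indices are integers because `N` and `M` may differ; the property is then periodic in `t` with
period `N` as well as `M`. -/
def JoinsAt (R : V → V → Prop) (x : ZMod N → V) (y : ZMod M → V) (t : ℤ) : Prop :=
  ∀ i j : ℤ, i + j = t → R (x i) (y j)

theorem JoinsAt.add_left_period {t : ℤ} (h : JoinsAt R x y t) (k : ℤ) :
    JoinsAt R x y (t + N * k) := by
  intro i j hij
  simpa using h (i - N * k) j (by linarith)

theorem JoinsAt.add_right_period {t : ℤ} (h : JoinsAt R x y t) (k : ℤ) :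
    JoinsAt R x y (t + M * k) := by
  intro i j hij
  simpa using h i (j - M * k) (by linarith)

theorem JoinsAt.not_symm [Std.Asymm R] {t : ℤ} (h : JoinsAt R x y t) : ¬ JoinsAt R y x t :=
  fun h' => Std.Asymm.asymm _ _ (h 0 t (zero_add t)) (h' t 0 (add_zero t))

theorem exists_natCast_eq_intCast (N M : ℕ) [NeZero N] [NeZero M] (d : ℤ) :
    ∃ k : ℕ, (k : ZMod N) = d ∧ (k : ZMod M) = d := by
  refine ⟨(d : ZMod (N * M)).val, ?_, ?_⟩
  · rw [← map_natCast (ZMod.castHom (Dvd.intro M rfl) (ZMod N)), ZMod.natCast_zmod_val, map_intCast]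
  · rw [← map_natCast (ZMod.castHom (Dvd.intro_left N rfl) (ZMod M)), ZMod.natCast_zmod_val,
      map_intCast]

theorem joinsAt_of_arc_step [NeZero N] [NeZero M]
    (hstep : ∀ i j, R (x i) (y j) → R (x (i + 1)) (y (j - 1))) {i j : ℤ} (hij : R (x i) (y j)) :
    JoinsAt R x y (i + j) := by
  have hshift (k : ℕ) : R (x (i + k)) (y (j - k)) := by
    induction k with
    | zero => simpa using hij
    | succ k ih => simpa [add_assoc, sub_sub] using hstep _ _ ih
  intro i' j' hsum
  obtain ⟨k, hkN, hkM⟩ := exists_natCast_eq_intCast N M (i' - i)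
  have hj : j' = j - (i' - i) := by linarith
  simpa [hkN, hkM, hj] using hshift k

theorem exists_joinsAt_switch [NeZero N] [Std.Asymm R]
    {s : ℤ} (hdich : ∀ t, JoinsAt R x y t → JoinsAt R x y (t + s) ∨ JoinsAt R y x (t + s))
    {a b : ℤ} (ha : JoinsAt R x y a) (hb : JoinsAt R y x b) (hab : s ∣ b - a) :
    ∃ t, JoinsAt R x y t ∧ JoinsAt R y x (t + s) := by
  by_contra! hno
  have hforward (k : ℕ) : JoinsAt R x y (a + s * k) := by
    induction k with
    | zero => simpa using ha
    | succ k ih =>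
      rw [Nat.cast_succ, mul_add_one, ← add_assoc]
      exact (hdich _ ih).resolve_right (hno _ ih)
  obtain ⟨d, hd⟩ := hab
  obtain ⟨k, hk, -⟩ := exists_natCast_eq_intCast N N d
  obtain ⟨e, he⟩ := (ZMod.intCast_eq_intCast_iff_dvd_sub (k : ℤ) d N).1 (by simpa using hk)
  have hb' : a + s * k + N * (s * e) = b := by linear_combination s * -he - hd
  exact (hb' ▸ (hforward k).add_left_period (s * e)).not_symm hb

theorem DisjointDicycles.hasDicycleThrough_of_two_joinsAt (h : DisjointDicycles R x y) {k k' : ℕ}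
    (hk : k < N) (hk' : k' < M) {t : ℤ} (hxy : JoinsAt R x y t) (hyx : JoinsAt R y x (t - k + k'))
    {v : V} (hv : v ∈ Set.range x ∪ Set.range y) : HasDicycleThrough R (k + 1 + (k' + 1)) v := by
  have hcycle (i j : ℤ) (hij : i + k + j = t) (hv : v ∈ dipath x i k ++ dipath y j k') :
      HasDicycleThrough R (k + 1 + (k' + 1)) v :=
    h.hasDicycleThrough_of_two_dipaths hk hk' (by simpa using hxy (i + k) j hij)
      (by simpa using hyx (j + k') i (by linarith)) hv
  rcases hv with ⟨i, rfl⟩ | ⟨j, rfl⟩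
  · obtain ⟨i, rfl⟩ := ZMod.intCast_surjective i
    exact hcycle i (t - k - i) (by ring) (List.mem_append_left _ (start_mem_dipath x i k))
  · obtain ⟨j, rfl⟩ := ZMod.intCast_surjective j
    exact hcycle (t - k - j) j (by ring) (List.mem_append_right _ (start_mem_dipath y j k'))

theorem DisjointDicycles.hasDicycleThrough_of_four_joinsAt (h : DisjointDicycles R x y) {p q r : ℕ}
    (hN : p + 1 + q + 1 = N) (hM : r + 3 = M) {a : ℤ}
    (h₁ : JoinsAt R x y a) (h₂ : JoinsAt R y x (a + 2))
    (h₃ : JoinsAt R x y (a - (p + 1) + 2)) (h₄ : JoinsAt R y x (a - (p + 1)))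
    {v : V} (hv : v ∈ Set.range x ∪ Set.range y) : HasDicycleThrough R (N + M) v := by
  have hcycle (i j : ℤ) (hij : i + p + j = a)
      (hv : v ∈ dipath x i (p + 1 + q) ++ dipath y j (1 + 1 + r)) :
      HasDicycleThrough R (N + M) v := by
    have hNM : N + M = p + 1 + q + 1 + (1 + 1 + r + 1) := by omega
    rw [hNM]
    refine h.hasDicycleThrough_of_four_dipaths (by omega) (by omega) ?_ ?_ ?_ ?_ hv
    · simpa using h₁ (i + p) j hij
    · simpa using h₂ (j + 1) (i + (p + 1)) (by linarith)
    · simpa [one_add_one_eq_two] using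
        h₃.add_left_period 1 (i + (p + 1) + q) (j + 2) (by rw [← hN]; push_cast; linarith)
    · simpa [one_add_one_eq_two] using
        h₄.add_left_period 1 (j + 2 + r) i (by rw [← hM]; push_cast; linarith)
  rcases hv with ⟨i, rfl⟩ | ⟨j, rfl⟩
  · obtain ⟨i, rfl⟩ := ZMod.intCast_surjective i
    exact hcycle i (a - p - i) (by ring) (List.mem_append_left _ (start_mem_dipath x i _))
  · obtain ⟨j, rfl⟩ := ZMod.intCast_surjective j
    exact hcycle (a - p - j) j (by ring) (List.mem_append_right _ (start_mem_dipath y j _))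

theorem DisjointDicycles.hasDicycleThrough_spanning [Std.Asymm R] [NeZero N]
    (h : DisjointDicycles R x y) (hM : 3 ≤ M) {a b : ℤ} (hxy : JoinsAt R x y a)
    (hyx : JoinsAt R y x (a + 2)) (hyx' : JoinsAt R y x b) (hxy' : JoinsAt R x y (b + 2)) {v : V}
    (hv : v ∈ Set.range x ∪ Set.range y) : HasDicycleThrough R (N + M) v := by
  have hNpos : (0 : ℤ) < N := by exact_mod_cast NeZero.pos N
  have hdiv := Int.emod_add_mul_ediv (a - b) N
  have hlt := Int.emod_lt_of_pos (a - b) hNpos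
  have hne : (a - b) % N ≠ 0 := fun h0 => by
    have hab : b + N * ((a - b) / N) = a := by linarith
    exact hxy.not_symm (hab ▸ hyx'.add_right_period _)
  obtain ⟨p, hp⟩ : ∃ p : ℕ, (p : ℤ) + 1 = (a - b) % N :=
    ⟨((a - b) % N - 1).toNat, by have := Int.emod_nonneg (a - b) hNpos.ne'; omega⟩
  have hb : b + N * ((a - b) / N) = a - (p + 1) := by linarith
  refine h.hasDicycleThrough_of_four_joinsAt (p := p) (q := N - 2 - p) (r := M - 3) (by omega)
    (by omega) hxy hyx ?_ (hb ▸ hyx'.add_right_period _) hv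
  convert hxy'.add_left_period ((a - b) / N) using 1
  linarith

theorem DisjointDicycles.hasDicycleThrough_short (h : DisjointDicycles R x y) {k : ℕ} (hkN : k < N)
    (hkM : k + 2 < M) {t : ℤ} (hxy : JoinsAt R x y t) (hyx : JoinsAt R y x (t + 2)) {v : V}
    (hv : v ∈ Set.range x ∪ Set.range y) : HasDicycleThrough R (2 * k + 4) v := by
  have hlen : 2 * k + 4 = k + 1 + (k + 2 + 1) := by ring
  rw [hlen]
  refine h.hasDicycleThrough_of_two_joinsAt hkN hkM hxy ?_ hv
  convert hyx using 1
  push_cast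
  ring

theorem DisjointDicycles.hasDicycleThrough_long (h : DisjointDicycles R x y) {r : ℕ} (hr : 0 < r)
    (hrN : r + 2 ≤ N) (hrM : r ≤ M) {t : ℤ} (hxy : JoinsAt R x y t)
    (hyx : JoinsAt R y x (t + 2)) {v : V} (hv : v ∈ Set.range x ∪ Set.range y) :
    HasDicycleThrough R (N + M - 2 * r) v := by
  have hlen : N + M - 2 * r = N - 2 - r + 1 + (M - r + 1) := by omega
  rw [hlen]
  refine h.hasDicycleThrough_of_two_joinsAt (by omega) (by omega) hxy ?_ hv
  convert (hyx.add_right_period (-1)).add_left_period 1 using 1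
  omega

theorem DisjointDicycles.hasDicycleThrough_of_switches [Std.Asymm R] {n m : ℕ}
    {x : ZMod (2 * n) → V} {y : ZMod (2 * m) → V} (h : DisjointDicycles R x y) (hn : 2 ≤ n)
    (hm : 2 ≤ m) (hup : ∃ t, JoinsAt R x y t ∧ JoinsAt R y x (t + 2))
    (hdown : ∃ t, JoinsAt R y x t ∧ JoinsAt R x y (t + 2)) {l : ℕ} (hl : Even l)
    (hrange : (4 ≤ l ∧ l ≤ 4 * min n m) ∨ (2 * max n m ≤ l ∧ l ≤ 2 * n + 2 * m)) {v : V}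
    (hv : v ∈ Set.range x ∪ Set.range y) : HasDicycleThrough R l v := by
  have : NeZero (2 * n) := ⟨by omega⟩
  obtain ⟨a, hxy, hyx⟩ := hup
  obtain ⟨b, hyx', hxy'⟩ := hdown
  obtain ⟨d, rfl⟩ := hl
  rcases eq_or_ne (d + d) (2 * n + 2 * m) with hham | hham
  · rw [hham]
    exact h.hasDicycleThrough_spanning (by omega) hxy hyx hyx' hxy' hv
  rcases hrange with ⟨hge, hle⟩ | ⟨hge, hle⟩
  · have hlen : d + d = 2 * (d - 2) + 4 := by omega
    rw [hlen]
    rcases Nat.le_total n m with hnm | hmn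
    · exact h.hasDicycleThrough_short (by omega) (by omega) hxy hyx hv
    · exact h.symm.hasDicycleThrough_short (by omega) (by omega) hyx' hxy' hv.symm
  · have hlen : d + d = 2 * n + 2 * m - 2 * (n + m - d) := by omega
    rw [hlen]
    exact h.hasDicycleThrough_long (by omega) (by omega) (by omega) hxy hyx hv

end Dicycles

section AlternatingCycles

variable {V : Type*} {G : SimpleGraph V} {c : Sym2 V → Bool} {out : V → Bool} {N M : ℕ}
  {x : ZMod N → V} {y : ZMod M → V}

/-- The orientation of the edges of `(G, c)` determined by a color `out v` for every vertex `v`: an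
edge between vertices with different `out`-colors points away from the end whose `out`-color it
has. Directed cycles of this digraph alternate. -/
def AltArc (G : SimpleGraph V) (c : Sym2 V → Bool) (out : V → Bool) (u w : V) : Prop :=
  G.Adj u w ∧ c s(u, w) = out u ∧ out u ≠ out w

instance : Std.Asymm (AltArc G c out) where
  asymm u w huw hwu := huw.2.2 (by rw [← huw.2.1, ← hwu.2.1, Sym2.eq_swap])

theorem altArc_or_altArc {u w : V} (hadj : G.Adj u w) (hne : out u ≠ out w) :
    AltArc G c out u w ∨ AltArc G c out w u := by
  rcases Bool.eq_or_eq_not (c s(u, w)) (out u) with h | h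
  · exact .inl ⟨hadj, h, hne⟩
  · exact .inr ⟨hadj.symm, by rw [Sym2.eq_swap, h, Bool.eq_not.2 hne.symm], hne.symm⟩

theorem IsDicycle.isAltCycle (hx : IsDicycle (AltArc G c out) x) : IsAltCycle G c x := by
  refine ⟨hx.1, fun i => (hx.2 i).1, fun i => ?_⟩
  have hsucc : i + 2 = i + 1 + 1 := by ring
  rw [hsucc, (hx.2 i).2.1, (hx.2 (i + 1)).2.1]
  exact (hx.2 i).2.2

theorem IsDicycle.periodic_out (hx : IsDicycle (AltArc G c out) x) :
    Function.Periodic (fun k : ℤ => out (x k)) 2 := by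
  intro k
  have h₁ := (hx.2 k).2.2
  have h₂ := (hx.2 (k + 1)).2.2
  have hsucc : ((k + 2 : ℤ) : ZMod N) = k + 1 + 1 := by push_cast; ring
  simp only [hsucc, Bool.eq_not.2 h₁, Bool.eq_not.2 h₂, Bool.not_not]

theorem IsDicycle.even_sub_of_out_eq (hx : IsDicycle (AltArc G c out) x) {i j : ℤ}
    (hij : out (x i) = out (x j)) : Even (j - i) := by
  by_contra hodd
  obtain ⟨d, hd⟩ := Int.not_even_iff_odd.1 hodd
  have hj : j = i + 1 + d * 2 := by linarith
  refine (hx.2 i).2.2 ?_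
  rw [hij, hj]
  simpa using hx.periodic_out.int_mul d (i + 1)

theorem HasGoodPair.symm (h : HasGoodPair G c y x) : HasGoodPair G c x y := by
  obtain ⟨s, s', t, t', hs, ht, hadj, hadj', hss, hcross, htt⟩ := h
  refine ⟨t, t', s, s', ht, hs, hadj.symm, hadj'.symm, ?_, ?_, ?_⟩
  · rw [Sym2.eq_swap, htt, Sym2.eq_swap]
  · rw [Sym2.eq_swap, hcross, Sym2.eq_swap]
  · rw [Sym2.eq_swap, hss, Sym2.eq_swap]

theorem DisjointDicycles.altArc_step (h : DisjointDicycles (AltArc G c out) x y)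
    (hadj : ∀ i j, G.Adj (x i) (y j)) (hgood : ¬ HasGoodPair G c x y) (i : ZMod N) (j : ZMod M)
    (hij : AltArc G c out (x i) (y j)) : AltArc G c out (x (i + 1)) (y (j - 1)) := by
  have hx := h.left.2 i
  have hy : AltArc G c out (y (j - 1)) (y j) := by simpa using h.right.2 (j - 1)
  have hout : out (y (j - 1)) = out (x i) := by
    rw [Bool.eq_not.2 hy.2.2, Bool.eq_not.2 hij.2.2]
  have hne : out (x (i + 1)) ≠ out (y (j - 1)) := hout ▸ hx.2.2.symm
  refine (altArc_or_altArc (hadj _ _) hne).resolve_right fun hback => ?_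
  refine hgood ⟨i, i + 1, j, j - 1, .inr rfl, .inl rfl, hadj _ _, hadj _ _, ?_, ?_, ?_⟩
  · rw [hx.2.1, hij.2.1]
  · rw [Sym2.eq_swap, hback.2.1, hij.2.1, hout]
  · rw [hy.2.1, hij.2.1, hout]

theorem DisjointDicycles.joinsAt_of_altArc [NeZero N] [NeZero M]
    (h : DisjointDicycles (AltArc G c out) x y) (hadj : ∀ i j, G.Adj (x i) (y j))
    (hgood : ¬ HasGoodPair G c x y) {i j : ℤ} (hij : AltArc G c out (x i) (y j)) :
    JoinsAt (AltArc G c out) x y (i + j) :=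
  joinsAt_of_arc_step (h.altArc_step hadj hgood) hij

theorem DisjointDicycles.joinsAt_add_two [NeZero N] [NeZero M]
    (h : DisjointDicycles (AltArc G c out) x y) (hadj : ∀ i j, G.Adj (x i) (y j))
    (hgood : ¬ HasGoodPair G c x y) {t : ℤ} (ht : JoinsAt (AltArc G c out) x y t) :
    JoinsAt (AltArc G c out) x y (t + 2) ∨ JoinsAt (AltArc G c out) y x (t + 2) := by
  have hne : out (x (t + 2 : ℤ)) ≠ out (y (0 : ℤ)) :=
    (h.left.periodic_out t).trans_ne (ht t 0 (add_zero t)).2.2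
  rcases altArc_or_altArc (hadj _ _) hne with hxy | hyx
  · exact .inl (by simpa using h.joinsAt_of_altArc hadj hgood hxy)
  · exact .inr (by simpa using
      h.symm.joinsAt_of_altArc (fun j i => (hadj i j).symm) (fun hyx => hgood hyx.symm) hyx)

theorem DisjointDicycles.exists_altArc_switch [NeZero N] [NeZero M]
    (h : DisjointDicycles (AltArc G c out) x y) (hadj : ∀ i j, G.Adj (x i) (y j))
    (hgood : ¬ HasGoodPair G c x y) (hxy : ∃ i j, AltArc G c out (x i) (y j))
    (hyx : ∃ j i, AltArc G c out (y j) (x i)) :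
    ∃ t, JoinsAt (AltArc G c out) x y t ∧ JoinsAt (AltArc G c out) y x (t + 2) := by
  obtain ⟨i, j, hij⟩ := hxy
  obtain ⟨j', i', hji⟩ := hyx
  obtain ⟨i, rfl⟩ := ZMod.intCast_surjective i
  obtain ⟨j, rfl⟩ := ZMod.intCast_surjective j
  obtain ⟨i', rfl⟩ := ZMod.intCast_surjective i'
  obtain ⟨j', rfl⟩ := ZMod.intCast_surjective j'
  have ha := h.joinsAt_of_altArc hadj hgood hij
  have hb := h.symm.joinsAt_of_altArc (fun j i => (hadj i j).symm) (fun hyx => hgood hyx.symm) hji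
  refine exists_joinsAt_switch (fun t => h.joinsAt_add_two hadj hgood) ha hb ?_
  refine (h.left.even_sub_of_out_eq ?_).two_dvd
  have h₁ := (ha (i + j) 0 (add_zero _)).2.2
  have h₂ := (hb 0 (j' + i') (zero_add _)).2.2
  rw [Bool.eq_not.2 h₁, Bool.eq_not.2 h₂.symm]

theorem IsAltCycle.two_le {n : ℕ} {x : ZMod (2 * n) → V} (hx : IsAltCycle G c x) (hn : 0 < n) :
    2 ≤ n := by
  by_contra hlt
  obtain rfl : n = 1 := by omega
  exact hx.2.2 0 (by simp [Sym2.eq_swap, show (2 : ZMod (2 * 1)) = 0 from rfl])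

/-- The color of the edge by which the cycle `x` leaves its `i`-th vertex; with these values of
`out`, an alternating cycle `x` is a directed cycle of `AltArc G c out`. -/
def leavingColor (c : Sym2 V → Bool) (x : ZMod N → V) (i : ZMod N) : Bool :=
  c s(x i, x (i + 1))

theorem isAltCycle_iff : IsAltCycle G c x ↔ Function.Injective x ∧
    (∀ i, G.Adj (x i) (x (i + 1))) ∧ ∀ i, leavingColor c x i ≠ leavingColor c x (i + 1) := by
  have hsucc (i : ZMod N) : i + 1 + 1 = i + 2 := by ring
  simp only [IsAltCycle, leavingColor, hsucc]

theorem IsAltCycle.leavingColor_ne_succ (hx : IsAltCycle G c x) :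
    ∀ i, leavingColor c x i ≠ leavingColor c x (i + 1) :=
  (isAltCycle_iff.1 hx).2.2

theorem IsAltCycle.isDicycle (hx : IsAltCycle G c x) (hout : ∀ i, out (x i) = leavingColor c x i) :
    IsDicycle (AltArc G c out) x := by
  refine ⟨hx.1, fun i => ⟨hx.2.1 i, (hout i).symm, ?_⟩⟩
  rw [hout, hout]
  exact hx.leavingColor_ne_succ i

theorem exists_common_extension {α β γ δ : Type*} [Nonempty δ] {f : α → γ} {g : β → γ}
    (hf : Function.Injective f) (hg : Function.Injective g)
    (hfg : Disjoint (Set.range f) (Set.range g)) (a : α → δ) (b : β → δ) :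
    ∃ F : γ → δ, (∀ i, F (f i) = a i) ∧ ∀ j, F (g j) = b j := by
  refine ⟨Function.extend f a (Function.extend g b fun _ => Classical.arbitrary δ),
    fun i => hf.extend_apply _ _ _, fun j => ?_⟩
  rw [Function.extend_apply', hg.extend_apply]
  rintro ⟨i, hi⟩
  exact Set.disjoint_left.1 hfg ⟨i, hi⟩ ⟨j, rfl⟩

theorem leavingColor_reverse (c : Sym2 V → Bool) (x : ZMod N → V) (i : ZMod N) :
    leavingColor c (fun i => x (-i)) i = leavingColor c x (-(i + 1)) := by
  have hpred : -(i + 1) + 1 = -i := by ring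
  rw [leavingColor, leavingColor, hpred, Sym2.eq_swap]

theorem IsAltCycle.leavingColor_reverse_eq_not (hx : IsAltCycle G c x) (i : ZMod N) :
    leavingColor c (fun i => x (-i)) i = !leavingColor c x (-i) := by
  rw [leavingColor_reverse, Bool.eq_not]
  simpa using hx.leavingColor_ne_succ (-(i + 1))

theorem IsAltCycle.reverse (hx : IsAltCycle G c x) : IsAltCycle G c fun i => x (-i) := by
  refine isAltCycle_iff.2 ⟨hx.1.comp neg_injective, fun i => ?_, fun i => ?_⟩
  · simpa using (hx.2.1 (-(i + 1))).symm
  · rw [hx.leavingColor_reverse_eq_not, hx.leavingColor_reverse_eq_not]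
    simpa using (hx.leavingColor_ne_succ (-(i + 1))).symm

theorem HasGoodPair.of_reverse (h : HasGoodPair G c x fun j => y (-j)) : HasGoodPair G c x y := by
  obtain ⟨s, s', t, t', hs, ht, h⟩ := h
  refine ⟨s, s', -t, -t', hs, ?_, h⟩
  rcases ht with rfl | rfl
  · exact .inr (by ring)
  · exact .inl (by ring)

theorem IsCGSHam.reverse {n m : ℕ} {x : ZMod (2 * n) → V} {y : ZMod (2 * m) → V}
    (hG : IsCGSHam G c x y) : IsCGSHam G c x fun j => y (-j) := by
  obtain ⟨hx, hy, hdisj, hcover, hadj⟩ := hG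
  have hrange : Set.range (fun j => y (-j)) = Set.range y :=
    (Equiv.neg (ZMod (2 * m))).surjective.range_comp y
  exact ⟨hx, hy.reverse, by rwa [hrange], by rwa [hrange], fun i j => hadj i (-j)⟩

/-- For two disjoint alternating cycles with leaving colors `a` and `b`, joined by edges of colors
`e i j`: under the orientation `AltArc`, some edge points from the first cycle to the second and
some edge points back. -/
def PointsBothWays {ι κ : Type*} (a : ι → Bool) (b : κ → Bool) (e : ι → κ → Bool) : Prop :=
  (∃ i j, a i ≠ b j ∧ e i j = a i) ∧ ∃ i j, a i ≠ b j ∧ e i j = b j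

theorem pointsBothWays_or_not {ι κ : Type*} (a : ι → Bool) (b : κ → Bool) {e : ι → κ → Bool}
    (hrow : ∃ i j j', e i j ≠ e i j') (hcol : ∃ j i i', e i j ≠ e i' j) :
    PointsBothWays a b e ∨ PointsBothWays a (fun j => !b j) e := by
  have one_way {b : κ → Bool} (h : ¬ PointsBothWays a b e) :
      (∀ i j, a i ≠ b j → e i j = a i) ∨ ∀ i j, a i ≠ b j → e i j = b j := by
    rcases not_and_or.1 h with h | h <;> push Not at h
    · exact .inr fun i j hne => by simp [Bool.eq_not.2 (h i j hne), Bool.eq_not.2 hne]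
    · exact .inl fun i j hne => by simp [Bool.eq_not.2 (h i j hne), Bool.eq_not.2 hne]
  by_contra! hno
  have hconst : (∀ i j, e i j = a i) ∨ (∀ i j, e i j = !a i) ∨
      (∀ i j, e i j = b j) ∨ ∀ i j, e i j = !b j := by
    have bool_cases (i j) := Bool.eq_or_eq_not (a i) (b j)
    rcases one_way hno.1 with h | h <;> rcases one_way hno.2 with h' | h'
    · exact .inl fun i j => by grind
    · exact .inr (.inr (.inr fun i j => by grind))
    · exact .inr (.inr (.inl fun i j => by grind))
    · exact .inr (.inl fun i j => by rcases bool_cases i j with hab | hab <;> simp_all)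
  grind

theorem IsCGSHam.exists_altCycle_of_pointsBothWays {n m : ℕ} (hn : 0 < n) (hm : 0 < m)
    {x : ZMod (2 * n) → V} {y : ZMod (2 * m) → V} (hG : IsCGSHam G c x y)
    (hgood : ¬ HasGoodPair G c x y)
    (hways : PointsBothWays (leavingColor c x) (leavingColor c y) fun i j => c s(x i, y j))
    {v : V} {l : ℕ} (hl : Even l)
    (hrange : (4 ≤ l ∧ l ≤ 4 * min n m) ∨ (2 * max n m ≤ l ∧ l ≤ 2 * n + 2 * m)) :
    ∃ z : ZMod l → V, IsAltCycle G c z ∧ v ∈ Set.range z := by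
  obtain ⟨hx, hy, hdisj, hcover, hadj⟩ := hG
  have : NeZero (2 * n) := ⟨by omega⟩
  have : NeZero (2 * m) := ⟨by omega⟩
  obtain ⟨out, hox, hoy⟩ :=
    exists_common_extension hx.1 hy.1 hdisj (leavingColor c x) (leavingColor c y)
  have h : DisjointDicycles (AltArc G c out) x y :=
    ⟨hx.isDicycle hox, hy.isDicycle hoy, fun i j => hdisj.ne_of_mem ⟨i, rfl⟩ ⟨j, rfl⟩⟩
  have hxy : ∃ i j, AltArc G c out (x i) (y j) := by
    obtain ⟨i, j, hne, hc⟩ := hways.1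
    exact ⟨i, j, hadj i j, hc.trans (hox i).symm, by rwa [hox, hoy]⟩
  have hyx : ∃ j i, AltArc G c out (y j) (x i) := by
    obtain ⟨i, j, hne, hc⟩ := hways.2
    refine ⟨j, i, (hadj i j).symm, ?_, by rw [hox, hoy]; exact hne.symm⟩
    rw [hoy, Sym2.eq_swap]
    exact hc
  obtain ⟨z, hz, hv⟩ := h.hasDicycleThrough_of_switches (hx.two_le hn) (hy.two_le hm)
    (h.exists_altArc_switch hadj hgood hxy hyx)
    (h.symm.exists_altArc_switch (fun j i => (hadj i j).symm) (fun hyx => hgood hyx.symm) hyx hxy)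
    hl hrange (hcover v)
  exact ⟨z, hz.isAltCycle, hv⟩

theorem IsAltCycle.pointsBothWays_reverse {a : ZMod N → Bool} (hy : IsAltCycle G c y)
    (h : PointsBothWays a (fun j => !leavingColor c y j) fun i j => c s(x i, y j)) :
    PointsBothWays a (leavingColor c fun j => y (-j)) fun i j => c s(x i, y (-j)) := by
  obtain ⟨⟨i, j, hij⟩, ⟨i', j', hij'⟩⟩ := h
  exact ⟨⟨i, -j, by simpa [hy.leavingColor_reverse_eq_not] using hij⟩,
    ⟨i', -j', by simpa [hy.leavingColor_reverse_eq_not] using hij'⟩⟩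

end AlternatingCycles

/-- Let `G ∈ G₁ ⊕ G₂` where `G₁`, `G₂` have Hamiltonian alternating
cycles `C₁ = x` (length `2n`), `C₂ = y` (length `2m`). If `G` has no good pair and each
`Cᵢ` has a vertex that is non-singular with respect to `C_{3-i}`, then for each vertex
`v` of `G` and each even `l ∈ [4, 4·min n m] ∪ [2·max n m, 2n + 2m]` there is an
alternating cycle of length `l` in `G` passing through `v`. -/
theorem alt_cycles_short_and_long {V : Type*} (G : SimpleGraph V) (c : Sym2 V → Bool)
    {n m : ℕ} (hn : 0 < n) (hm : 0 < m)
    (x : ZMod (2 * n) → V) (y : ZMod (2 * m) → V)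
    (hG : IsCGSHam G c x y) (hgp : ¬ HasGoodPair G c x y)
    (hns1 : ∃ i, ¬ SingularX c x y i) (hns2 : ∃ j, ¬ SingularY c x y j) :
    ∀ v : V, ∀ l : ℕ, Even l →
      ((4 ≤ l ∧ l ≤ 4 * min n m) ∨ (2 * max n m ≤ l ∧ l ≤ 2 * n + 2 * m)) →
      ∃ z : ZMod l → V, IsAltCycle G c z ∧ v ∈ Set.range z := by
  intro v l hl hrange
  have hrow : ∃ i j j', c s(x i, y j) ≠ c s(x i, y j') := by
    simpa [SingularX] using hns1
  have hcol : ∃ j i i', c s(x i, y j) ≠ c s(x i', y j) := by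
    simpa [SingularY] using hns2
  rcases pointsBothWays_or_not (leavingColor c x) (leavingColor c y) hrow hcol with h | h
  · exact hG.exists_altCycle_of_pointsBothWays hn hm hgp h hl hrange
  · exact hG.reverse.exists_altCycle_of_pointsBothWays hn hm (fun hrev => hgp hrev.of_reverse)
      (hG.2.1.pointsBothWays_reverse h) hl hrange
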